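/- arXiv:2602.10857 — 4 statements merged into one kernel-verified Lean document; each statement's English description precedes it below -/
import Mathlib

section
/- Fix a function g : ℕ → ℝ_{>0}. There exists a rate function u such that the stationary distribution corresponding to u in the homogeneous PALRMP (for any fixed q ≥ 0, q ≠ 1) is NOT factorised, but the stationary distribution corresponding to u in the SLRMP and in the homogeneous SLRMP (q = 1) is factorised, with one-point functions f(x,n) = x^n·g(n) and f(n) = g(n), respectively. -/
open scoped Classical

namespace LRMP

/-- A rate function: `u m n` is positive when the departure site is occupied
(`m ≥ 1`) and zero when it is empty (`m = 0`). -/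
def IsRate (u : ℕ → ℕ → ℝ) : Prop :=
  (∀ m n : ℕ, 1 ≤ m → 0 < u m n) ∧ ∀ n : ℕ, u 0 n = 0

/-- The configuration `η^{k,ℓ}`: one particle moved from site `k` to site `ℓ`. -/
def move (L : ℕ) (η : ZMod L → ℕ) (k ℓ : ZMod L) : ZMod L → ℕ :=
  fun a => if a = k then η a - 1 else if a = ℓ then η a + 1 else η a

/-- Every site strictly between `k` and `ℓ`, moving clockwise from `k`, is empty in `η`. -/
def RightClear (L : ℕ) (η : ZMod L → ℕ) (k ℓ : ZMod L) : Prop :=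
  ∀ i : ℕ, 0 < i → i < (ℓ - k).val → η (k + (i : ZMod L)) = 0

/-- Every site strictly between `k` and `ℓ`, moving counterclockwise from `k`, is empty in `η`. -/
def LeftClear (L : ℕ) (η : ZMod L → ℕ) (k ℓ : ZMod L) : Prop :=
  ∀ i : ℕ, 0 < i → i < (k - ℓ).val → η (k - (i : ZMod L)) = 0

/-- The total rate of the transition `η → η^{k,ℓ}` in the PALRMP with rate function `u`,
rate parameters `x` and asymmetry parameter `q`: a clockwise (right) hop contributes
`x ℓ * u (η k) (η ℓ)` and a counterclockwise (left) hop contributes `q * x ℓ * u (η k) (η ℓ)`. -/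
noncomputable def hopRate (L : ℕ) (u : ℕ → ℕ → ℝ) (x : ZMod L → ℝ) (q : ℝ)
    (η : ZMod L → ℕ) (k ℓ : ZMod L) : ℝ :=
  (if k ≠ ℓ ∧ 1 ≤ η k ∧ RightClear L η k ℓ then x ℓ * u (η k) (η ℓ) else 0) +
  (if k ≠ ℓ ∧ 1 ≤ η k ∧ LeftClear L η k ℓ then q * (x ℓ * u (η k) (η ℓ)) else 0)

/-- The incoming probability current into `η`: the sum over pairs `(k, ℓ)` of the
probability current due to the transition into `η` in which a particle moves from
site `k` to site `ℓ` (coming from the configuration `η^{ℓ,k} = move L η ℓ k`). -/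
noncomputable def inflow (L : ℕ) [NeZero L] (u : ℕ → ℕ → ℝ) (x : ZMod L → ℝ) (q : ℝ)
    (π : (ZMod L → ℕ) → ℝ) (η : ZMod L → ℕ) : ℝ :=
  ∑ k : ZMod L, ∑ ℓ : ZMod L,
    if 1 ≤ η ℓ then π (move L η ℓ k) * hopRate L u x q (move L η ℓ k) k ℓ else 0

/-- The outgoing probability current out of `η`. -/
noncomputable def outflow (L : ℕ) [NeZero L] (u : ℕ → ℕ → ℝ) (x : ZMod L → ℝ) (q : ℝ)
    (π : (ZMod L → ℕ) → ℝ) (η : ZMod L → ℕ) : ℝ :=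
  ∑ k : ZMod L, ∑ ℓ : ZMod L, π η * hopRate L u x q η k ℓ

/-- `π` satisfies the master (balance) equation of the PALRMP on `Ω_{L,N}`:
for every configuration `η` with `N` particles, the incoming probability current
equals the outgoing probability current. -/
def IsStationary (L : ℕ) [NeZero L] (N : ℕ) (u : ℕ → ℕ → ℝ) (x : ZMod L → ℝ) (q : ℝ)
    (π : (ZMod L → ℕ) → ℝ) : Prop :=
  ∀ η : ZMod L → ℕ, (∑ a, η a) = N → inflow L u x q π η = outflow L u x q π η

/-- The stationary distribution corresponding to the rate `u` in the PALRMP with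
asymmetry parameter `q` is factorised, with one-point function `f`: for every
`L ≥ 2`, `N ≥ 1` and all positive rate parameters `x`, the factorised distribution
`η ↦ ∏_ℓ f (x ℓ) (η ℓ)` (up to normalisation) is stationary. -/
def FactorisedPALRMP (u : ℕ → ℕ → ℝ) (q : ℝ) (f : ℝ → ℕ → ℝ) : Prop :=
  (∀ (x : ℝ) (n : ℕ), 0 < x → 0 < f x n) ∧
  ∀ (L N : ℕ) [NeZero L], 2 ≤ L → 1 ≤ N →
    ∀ x : ZMod L → ℝ, (∀ ℓ, 0 < x ℓ) →
      IsStationary L N u x q (fun η => ∏ ℓ, f (x ℓ) (η ℓ))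

/-- The stationary distribution corresponding to the rate `u` in the homogeneous
PALRMP (all rate parameters equal to `1`) with asymmetry parameter `q` is factorised,
with one-point function `f`. -/
def FactorisedHomog (u : ℕ → ℕ → ℝ) (q : ℝ) (f : ℕ → ℝ) : Prop :=
  (∀ n : ℕ, 0 < f n) ∧
  ∀ (L N : ℕ) [NeZero L], 2 ≤ L → 1 ≤ N →
    IsStationary L N u (fun _ => (1 : ℝ)) q (fun η => ∏ ℓ, f (η ℓ))

end LRMP

/-!
Moving a particle back along the arc it came from turns clockwise hops into counterclockwise ones.
If `u` and `f` satisfy `f (m+1) f n u (m+1, n) = f m f (n+1) u (n+1, m)`, the probability current of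
a hop equals that of the reversed hop, so for the factorised weight the net current into `η` is
`(1 - q)` times the difference between the total counterclockwise and clockwise rates out of `η`.
It vanishes for `q = 1`.

Conversely, a factorised stationary distribution of the homogeneous process satisfies this identity,
by two-site systems. If `q ≠ 1`, the three-site configuration `(m, n, 0)` then forces
`u (m, 0) = u (n, 0)` for `m, n ≥ 1`. The rate `u (m, n) = (m + n) g (m + n) / (g m g n)` satisfies
the identity with `f = g`, but has `u (m, 0) = m / g 0`.
-/

namespace LRMP

section Move

variable {L : ℕ} {η : ZMod L → ℕ} {k ℓ a : ZMod L}

lemma move_apply_source : move L η k ℓ k = η k - 1 := if_pos rfl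

lemma move_apply_target (hkℓ : k ≠ ℓ) : move L η k ℓ ℓ = η ℓ + 1 := by
  simp [move, hkℓ.symm]

lemma move_apply_of_ne (hk : a ≠ k) (hℓ : a ≠ ℓ) : move L η k ℓ a = η a := by
  simp [move, hk, hℓ]

end Move

section Clear

variable {L : ℕ} {η ξ : ZMod L → ℕ} {k ℓ : ZMod L} {i : ℕ}

lemma natCast_ne_of_lt_val {z : ZMod L} (h : i < z.val) : (i : ZMod L) ≠ z := by
  rintro rfl
  rw [ZMod.val_natCast] at h
  exact h.not_ge (Nat.mod_le i L)

variable [NeZero L]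

lemma natCast_ne_zero_of_lt_val {z : ZMod L} (hi : 0 < i) (h : i < z.val) :
    (i : ZMod L) ≠ 0 := by
  rw [Ne, ZMod.natCast_eq_zero_iff]
  exact Nat.not_dvd_of_pos_of_lt hi (h.trans z.val_lt)

lemma natCast_val_sub {z : ZMod L} (h : i ≤ z.val) : ((z.val - i : ℕ) : ZMod L) = z - i := by
  rw [Nat.cast_sub h, ZMod.natCast_zmod_val]

lemma leftClear_iff_rightClear : LeftClear L η k ℓ ↔ RightClear L η ℓ k := by
  constructor <;> intro h i hi hlt
  · have hi' : ℓ + (i : ZMod L) = k - ((k - ℓ).val - i : ℕ) := by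
      rw [natCast_val_sub hlt.le]
      ring
    exact hi' ▸ h _ (by omega) (by omega)
  · have hi' : k - (i : ZMod L) = ℓ + ((k - ℓ).val - i : ℕ) := by
      rw [natCast_val_sub hlt.le]
      ring
    exact hi' ▸ h _ (by omega) (by omega)

lemma rightClear_congr (h : ∀ a, a ≠ k → a ≠ ℓ → η a = ξ a) :
    RightClear L η k ℓ ↔ RightClear L ξ k ℓ := by
  refine forall_congr' fun i => forall_congr' fun hi => forall_congr' fun hlt => ?_
  have hk : k + (i : ZMod L) ≠ k := by simpa using natCast_ne_zero_of_lt_val hi hlt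
  have hℓ : k + (i : ZMod L) ≠ ℓ := fun hi' =>
    natCast_ne_of_lt_val hlt (eq_sub_of_add_eq' hi')
  rw [h _ hk hℓ]

lemma rightClear_move_iff_leftClear :
    RightClear L (move L η ℓ k) k ℓ ↔ LeftClear L η ℓ k := by
  rw [leftClear_iff_rightClear]
  exact rightClear_congr fun _ hk hℓ => move_apply_of_ne hℓ hk

lemma leftClear_move_iff_rightClear :
    LeftClear L (move L η ℓ k) k ℓ ↔ RightClear L η ℓ k := by
  rw [leftClear_iff_rightClear]
  exact rightClear_congr fun _ hℓ hk => move_apply_of_ne hℓ hk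

end Clear

section Current

variable {L : ℕ}

/-- The rate of the clockwise hop from `k` to `ℓ`. -/
noncomputable def rightRate (u : ℕ → ℕ → ℝ) (x : ZMod L → ℝ) (η : ZMod L → ℕ)
    (k ℓ : ZMod L) : ℝ :=
  if k ≠ ℓ ∧ 1 ≤ η k ∧ RightClear L η k ℓ then x ℓ * u (η k) (η ℓ) else 0

/-- The rate of the counterclockwise hop from `k` to `ℓ`, without the asymmetry factor `q`. -/
noncomputable def leftRate (u : ℕ → ℕ → ℝ) (x : ZMod L → ℝ) (η : ZMod L → ℕ)
    (k ℓ : ZMod L) : ℝ :=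
  if k ≠ ℓ ∧ 1 ≤ η k ∧ LeftClear L η k ℓ then x ℓ * u (η k) (η ℓ) else 0

/-- The balance, on two sites, between a hop out of a site with `m + 1` particles onto one with `n`
particles and the reversed hop, under the product weight with one-point function `f`. -/
def DetailedBalance (u : ℕ → ℕ → ℝ) (f : ℕ → ℝ) : Prop :=
  ∀ m n, f (m + 1) * f n * u (m + 1) n = f m * f (n + 1) * u (n + 1) m

variable {u : ℕ → ℕ → ℝ} {x : ZMod L → ℝ} {q : ℝ} {f : ℕ → ℝ} {η : ZMod L → ℕ} {k ℓ : ZMod L}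

lemma hopRate_eq_rightRate_add_leftRate :
    hopRate L u x q η k ℓ = rightRate u x η k ℓ + q * leftRate u x η k ℓ := by
  simp only [hopRate, rightRate, leftRate, mul_ite, mul_zero]

lemma leftRate_eq_rightRate (h : LeftClear L η k ℓ ↔ RightClear L η k ℓ) :
    leftRate u x η k ℓ = rightRate u x η k ℓ := by
  simp only [leftRate, rightRate, h]

variable [NeZero L]

/-- The unnormalised factorised distribution with one-point function `x ^ n * f n`. -/
noncomputable def weight (x : ZMod L → ℝ) (f : ℕ → ℝ) (η : ZMod L → ℕ) : ℝ :=
  ∏ a, x a ^ η a * f (η a)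

lemma weight_one : weight (fun _ : ZMod L => 1) f = fun η => ∏ a, f (η a) := by
  funext η
  simp only [weight, one_pow, one_mul]

lemma weight_eq_mul_prod_compl (hkℓ : k ≠ ℓ) :
    weight x f η = (x k ^ η k * f (η k)) * (x ℓ ^ η ℓ * f (η ℓ)) *
      ∏ a ∈ {k, ℓ}ᶜ, x a ^ η a * f (η a) := by
  rw [weight, ← Finset.prod_mul_prod_compl {k, ℓ}, Finset.prod_pair hkℓ]

lemma weight_move_mul_rate (h : DetailedBalance u f) (hkℓ : k ≠ ℓ) (hℓ : 1 ≤ η ℓ) :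
    weight x f (move L η ℓ k) * (x ℓ * u (move L η ℓ k k) (move L η ℓ k ℓ)) =
      weight x f η * (x k * u (η ℓ) (η k)) := by
  have hrest : ∏ a ∈ {k, ℓ}ᶜ, x a ^ move L η ℓ k a * f (move L η ℓ k a) =
      ∏ a ∈ {k, ℓ}ᶜ, x a ^ η a * f (η a) := by
    refine Finset.prod_congr rfl fun a ha => ?_
    simp only [Finset.mem_compl, Finset.mem_insert, Finset.mem_singleton, not_or] at ha
    rw [move_apply_of_ne ha.2 ha.1]
  obtain ⟨n, hn⟩ := Nat.exists_eq_add_of_le' hℓ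
  rw [weight_eq_mul_prod_compl hkℓ, weight_eq_mul_prod_compl hkℓ, hrest, move_apply_source,
    move_apply_target hkℓ.symm, hn, Nat.add_sub_cancel]
  linear_combination
    x k ^ (η k + 1) * x ℓ ^ (n + 1) * (∏ a ∈ {k, ℓ}ᶜ, x a ^ η a * f (η a)) * h (η k) n

lemma weight_move_mul_rightRate (h : DetailedBalance u f) (hkℓ : k ≠ ℓ) (hℓ : 1 ≤ η ℓ) :
    weight x f (move L η ℓ k) * rightRate u x (move L η ℓ k) k ℓ =
      weight x f η * leftRate u x η ℓ k := by
  have hk : 1 ≤ move L η ℓ k k := by simp [move_apply_target hkℓ.symm]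
  simp only [rightRate, leftRate, rightClear_move_iff_leftClear, hkℓ, hkℓ.symm, hk, hℓ, ne_eq,
    not_false_eq_true, true_and, mul_ite, mul_zero, weight_move_mul_rate h hkℓ hℓ]

lemma weight_move_mul_leftRate (h : DetailedBalance u f) (hkℓ : k ≠ ℓ) (hℓ : 1 ≤ η ℓ) :
    weight x f (move L η ℓ k) * leftRate u x (move L η ℓ k) k ℓ =
      weight x f η * rightRate u x η ℓ k := by
  have hk : 1 ≤ move L η ℓ k k := by simp [move_apply_target hkℓ.symm]
  simp only [rightRate, leftRate, leftClear_move_iff_rightClear, hkℓ, hkℓ.symm, hk, hℓ, ne_eq,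
    not_false_eq_true, true_and, mul_ite, mul_zero, weight_move_mul_rate h hkℓ hℓ]

lemma current_eq_weight_mul (h : DetailedBalance u f) :
    (if 1 ≤ η ℓ then weight x f (move L η ℓ k) * hopRate L u x q (move L η ℓ k) k ℓ else 0) =
      weight x f η * (leftRate u x η ℓ k + q * rightRate u x η ℓ k) := by
  by_cases hℓ : 1 ≤ η ℓ
  · rw [if_pos hℓ, hopRate_eq_rightRate_add_leftRate]
    by_cases hkℓ : k = ℓ
    · simp [rightRate, leftRate, hkℓ]
    · linear_combination weight_move_mul_rightRate (x := x) h hkℓ hℓ +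
        q * weight_move_mul_leftRate (x := x) h hkℓ hℓ
  · simp [rightRate, leftRate, hℓ]

theorem inflow_sub_outflow (h : DetailedBalance u f) :
    inflow L u x q (weight x f) η - outflow L u x q (weight x f) η =
      (1 - q) * weight x f η *
        (∑ k, ∑ ℓ, leftRate u x η k ℓ - ∑ k, ∑ ℓ, rightRate u x η k ℓ) := by
  have hin : inflow L u x q (weight x f) η = weight x f η *
      (∑ k, ∑ ℓ, leftRate u x η k ℓ + q * ∑ k, ∑ ℓ, rightRate u x η k ℓ) := by
    simp only [inflow, current_eq_weight_mul h, Finset.mul_sum, ← Finset.sum_add_distrib]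
    exact Finset.sum_comm
  have hout : outflow L u x q (weight x f) η = weight x f η *
      (∑ k, ∑ ℓ, rightRate u x η k ℓ + q * ∑ k, ∑ ℓ, leftRate u x η k ℓ) := by
    simp only [outflow, hopRate_eq_rightRate_add_leftRate, Finset.mul_sum,
      ← Finset.sum_add_distrib]
  rw [hin, hout]
  ring

end Current

section Factorised

variable {u : ℕ → ℕ → ℝ} {q : ℝ} {f : ℕ → ℝ}

theorem DetailedBalance.factorisedPALRMP (h : DetailedBalance u f) (hf : ∀ n, 0 < f n) :
    FactorisedPALRMP u 1 (fun x n => x ^ n * f n) := by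
  refine ⟨fun x n hx => mul_pos (pow_pos hx n) (hf n), fun L N _ _ _ x _ η _ => ?_⟩
  have := inflow_sub_outflow (x := x) (q := 1) (η := η) h
  rw [sub_self, zero_mul, zero_mul] at this
  exact sub_eq_zero.1 this

lemma FactorisedPALRMP.factorisedHomog {f : ℝ → ℕ → ℝ} (h : FactorisedPALRMP u q f) :
    FactorisedHomog u q (f 1) :=
  ⟨fun n => h.1 1 n one_pos, fun L N _ hL hN => h.2 L N hL hN _ fun _ => one_pos⟩

theorem DetailedBalance.factorisedHomog (h : DetailedBalance u f) (hf : ∀ n, 0 < f n) :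
    FactorisedHomog u 1 f := by
  simpa only [one_pow, one_mul] using (h.factorisedPALRMP hf).factorisedHomog

end Factorised

section TwoSites

variable {u : ℕ → ℕ → ℝ} {q : ℝ} {f : ℕ → ℝ}

lemma hopRate_two (hu : ∀ n, u 0 n = 0) {η : ZMod 2 → ℕ} {k ℓ : ZMod 2} (hkℓ : k ≠ ℓ) :
    hopRate 2 u (fun _ => 1) q η k ℓ = (1 + q) * u (η k) (η ℓ) := by
  have hright (a b : ZMod 2) : RightClear 2 η a b := fun i hi hlt => by
    have := ZMod.val_lt (b - a)
    omega
  rcases Nat.eq_zero_or_pos (η k) with h | h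
  · simp [hopRate, h, hu]
  · rw [hopRate, if_pos ⟨hkℓ, h, hright k ℓ⟩,
      if_pos ⟨hkℓ, h, leftClear_iff_rightClear.2 (hright ℓ k)⟩]
    ring

lemma FactorisedHomog.balance_two (hf : FactorisedHomog u q f) (hu : ∀ n, u 0 n = 0)
    (hq : 0 ≤ q) {m n : ℕ} (hmn : 1 ≤ m + n) :
    (if 1 ≤ m then f (m - 1) * f (n + 1) * u (n + 1) (m - 1) else 0) +
        (if 1 ≤ n then f (m + 1) * f (n - 1) * u (m + 1) (n - 1) else 0) =
      f m * f n * (u m n + u n m) := by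
  have hsum (G : ZMod 2 → ℝ) : ∑ a, G a = G 0 + G 1 := Fin.sum_univ_two G
  have hprod (G : ZMod 2 → ℝ) : ∏ a, G a = G 0 * G 1 := Fin.prod_univ_two G
  have h01 : (0 : ZMod 2) ≠ 1 := by decide
  have hself (η : ZMod 2 → ℕ) (k : ZMod 2) : hopRate 2 u (fun _ => 1) q η k k = 0 := by
    simp [hopRate]
  let η : ZMod 2 → ℕ := ![m, n]
  have h0 : η 0 = m := rfl
  have h1 : η 1 = n := rfl
  have h := hf.2 2 (m + n) le_rfl hmn η (Fin.sum_univ_two η)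
  simp only [inflow, outflow, hsum, hprod, hself, hopRate_two hu h01, hopRate_two hu h01.symm,
    move_apply_source, move_apply_target h01, move_apply_target h01.symm, h0, h1] at h
  have hq1 : 1 + q ≠ 0 := by positivity
  refine mul_left_cancel₀ hq1 ?_
  split_ifs at h ⊢ <;> linear_combination h

theorem FactorisedHomog.detailedBalance (hf : FactorisedHomog u q f) (hu : ∀ n, u 0 n = 0)
    (hq : 0 ≤ q) : DetailedBalance u f := by
  intro m
  induction m with
  | zero =>
    intro n
    simpa [hu] using hf.balance_two hu hq (m := 0) (n := n + 1) (by omega)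
  | succ m ih =>
    intro n
    have h := hf.balance_two hu hq (m := m + 1) (n := n + 1) (by omega)
    simp only [Nat.le_add_left, if_true, Nat.add_sub_cancel] at h
    linear_combination h + ih (n + 1)

end TwoSites

section ThreeSites

variable {u : ℕ → ℕ → ℝ} {q : ℝ} {f : ℕ → ℝ}

lemma rightClear_three {η : ZMod 3 → ℕ} {k ℓ : ZMod 3} :
    RightClear 3 η k ℓ ↔ (ℓ = k + 2 → η (k + 1) = 0) := by
  have hval : (ℓ - k).val = 2 ↔ ℓ = k + 2 := by
    revert k ℓ; decide
  have hlt := ZMod.val_lt (ℓ - k)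
  rw [← hval]
  constructor
  · intro h hk
    simpa using h 1 one_pos (by omega)
  · intro h i hi hik
    obtain rfl : i = 1 := by omega
    simpa using h (by omega)

lemma leftClear_three {η : ZMod 3 → ℕ} {k ℓ : ZMod 3} :
    LeftClear 3 η k ℓ ↔ (k = ℓ + 2 → η (ℓ + 1) = 0) := by
  rw [leftClear_iff_rightClear, rightClear_three]

lemma sum_leftRate_sub_sum_rightRate_three {η : ZMod 3 → ℕ} (h0 : 1 ≤ η 0) (h1 : 1 ≤ η 1)
    (h2 : η 2 = 0) :
    ∑ k, ∑ ℓ, leftRate u (fun _ => 1) η k ℓ - ∑ k, ∑ ℓ, rightRate u (fun _ => 1) η k ℓ =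
      u (η 0) 0 - u (η 1) 0 := by
  have hsum (G : ZMod 3 → ℝ) : ∑ a, G a = G 0 + G 1 + G 2 := Fin.sum_univ_three G
  have hself (k : ZMod 3) : leftRate u (fun _ => 1) η k k = rightRate u (fun _ => 1) η k k :=
    leftRate_eq_rightRate (by simp [leftClear_iff_rightClear])
  -- Both arcs between sites 0 and 1 are clear, so hops between them cancel.
  have h01 : leftRate u (fun _ => 1) η 0 1 = rightRate u (fun _ => 1) η 0 1 :=
    leftRate_eq_rightRate (iff_of_true (leftClear_three.2 fun _ => h2)
      (rightClear_three.2 fun h => by cases h))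
  have h10 : leftRate u (fun _ => 1) η 1 0 = rightRate u (fun _ => 1) η 1 0 :=
    leftRate_eq_rightRate (iff_of_true (leftClear_three.2 fun h => by cases h)
      (rightClear_three.2 fun _ => h2))
  have hleft02 : leftRate u (fun _ => 1) η 0 2 = u (η 0) 0 := by
    rw [leftRate, if_pos ⟨by decide, h0, leftClear_three.2 fun h => by cases h⟩, one_mul, h2]
  have hright02 : rightRate u (fun _ => 1) η 0 2 = 0 :=
    if_neg fun h => Nat.one_le_iff_ne_zero.1 h1 (rightClear_three.1 h.2.2 rfl)
  have hleft12 : leftRate u (fun _ => 1) η 1 2 = 0 :=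
    if_neg fun h => Nat.one_le_iff_ne_zero.1 h0 ((leftClear_three (k := 1) (ℓ := 2)).1 h.2.2 rfl)
  have hright12 : rightRate u (fun _ => 1) η 1 2 = u (η 1) 0 := by
    rw [rightRate, if_pos ⟨by decide, h1, rightClear_three.2 fun h => by cases h⟩, one_mul, h2]
  have hleft2 (ℓ : ZMod 3) : leftRate u (fun _ => 1) η 2 ℓ = 0 := by simp [leftRate, h2]
  have hright2 (ℓ : ZMod 3) : rightRate u (fun _ => 1) η 2 ℓ = 0 := by simp [rightRate, h2]
  simp only [hsum, hself, h01, h10, hleft02, hright02, hleft12, hright12, hleft2, hright2]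
  ring

theorem FactorisedHomog.rate_zero_right_eq (hf : FactorisedHomog u q f) (hu : ∀ n, u 0 n = 0)
    (hq : 0 ≤ q) (hq1 : q ≠ 1) {m n : ℕ} (hm : 1 ≤ m) (hn : 1 ≤ n) : u m 0 = u n 0 := by
  let η : ZMod 3 → ℕ := ![m, n, 0]
  have hstat := hf.2 3 (m + n) (by norm_num) (by omega) η (Fin.sum_univ_three η)
  rw [← weight_one, ← sub_eq_zero, inflow_sub_outflow (hf.detailedBalance hu hq),
    sum_leftRate_sub_sum_rightRate_three hm hn rfl, weight_one] at hstat
  have hpos : ∏ a, f (η a) ≠ 0 := Finset.prod_ne_zero_iff.2 fun a _ => (hf.1 _).ne'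
  exact sub_eq_zero.1
    ((mul_eq_zero.1 hstat).resolve_left (mul_ne_zero (sub_ne_zero.2 hq1.symm) hpos))

end ThreeSites

section Witness

variable {g : ℕ → ℝ}

/-- The rate function proving the theorem. For `m ≥ 1` the product `g m * g n * u m n` depends on
`m + n` only, which gives detailed balance; the factor `m + n` makes `u m 0` depend on `m`. -/
noncomputable def occupancyRate (g : ℕ → ℝ) (m n : ℕ) : ℝ :=
  if m = 0 then 0 else (m + n) * g (m + n) / (g m * g n)

lemma isRate_occupancyRate (hg : ∀ n, 0 < g n) : IsRate (occupancyRate g) := by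
  refine ⟨fun m n hm => ?_, fun n => if_pos rfl⟩
  have := hg m
  have := hg n
  have := hg (m + n)
  rw [occupancyRate, if_neg (by omega)]
  positivity

lemma detailedBalance_occupancyRate (hg : ∀ n, g n ≠ 0) : DetailedBalance (occupancyRate g) g := by
  have hmul (m n : ℕ) : g (m + 1) * g n * occupancyRate g (m + 1) n =
      (m + n + 1 : ℕ) * g (m + n + 1) := by
    rw [occupancyRate, if_neg m.succ_ne_zero, mul_div_cancel₀ _ (mul_ne_zero (hg _) (hg _)),
      Nat.add_right_comm]
    push_cast
    ring
  intro m n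
  rw [hmul, mul_comm (g m), hmul, Nat.add_comm n m]

lemma occupancyRate_zero_right {m : ℕ} (hm : g m ≠ 0) : occupancyRate g m 0 = m / g 0 := by
  rcases eq_or_ne m 0 with rfl | h
  · simp [occupancyRate]
  · rw [occupancyRate, if_neg h, Nat.cast_zero, add_zero, add_zero, mul_comm (g m),
      mul_div_mul_right _ _ hm]

end Witness

/-- there is a rate function `u` whose stationary distribution in the
homogeneous PALRMP (any `q ≥ 0`, `q ≠ 1`) is not factorised, but whose stationary
distribution in the SLRMP and in the homogeneous SLRMP (`q = 1`) is factorised, with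
one-point functions `x ^ n * g n` and `g n` respectively. -/
theorem exists_rate_slrmp_not_homog
    (g : ℕ → ℝ) (hg : ∀ n, 0 < g n) :
    ∃ u : ℕ → ℕ → ℝ, IsRate u ∧
      (∀ q : ℝ, 0 ≤ q → q ≠ 1 → ¬ ∃ f : ℕ → ℝ, FactorisedHomog u q f) ∧
      FactorisedPALRMP u 1 (fun x n => x ^ n * g n) ∧
      FactorisedHomog u 1 g := by
  have hg0 (n : ℕ) : g n ≠ 0 := (hg n).ne'
  have hrate := isRate_occupancyRate hg
  have hbal := detailedBalance_occupancyRate hg0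
  refine ⟨occupancyRate g, hrate, ?_, hbal.factorisedPALRMP hg, hbal.factorisedHomog hg⟩
  rintro q hq hq1 ⟨f, hf⟩
  have heq : occupancyRate g 1 0 = occupancyRate g 2 0 :=
    hf.rate_zero_right_eq hrate.2 hq hq1 le_rfl one_le_two
  rw [occupancyRate_zero_right (hg0 1), occupancyRate_zero_right (hg0 2),
    div_left_inj' (hg0 0)] at heq
  norm_num at heq

end LRMP
end

section
/- Let S be a set, (G,·) a group with identity e, M ∈ ℕ, and F : S×S → G. Suppose that for every L ≥ M and all s_1, s_2, …, s_L ∈ S (with the convention s_{L+1} = s_1), the ordered product ∏_{ℓ=1}^{L} F(s_ℓ, s_{ℓ+1}) equals e. Then for all p, q, r ∈ S, F(p,q) = F(p,r)·F(q,r)^{-1}. -/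
/-!
Constant sequences of two coprime lengths give `F p p = 1`. Hence the sequence `p, q, r, r, …, r`
gives `F p q * F q r * F r p = 1`, at any length from `3` on. In particular `F r p` is inverse to
`F p r`, so `F p q * F q r = F p r`.
-/

section CyclicProd

variable {S G : Type*} [Monoid G] {F : S → S → G} {m n : ℕ}

/-- The ordered product `F (s 0) (s 1) * F (s 1) (s 2) * ⋯ * F (s (L - 1)) (s 0)` around the closed
walk of length `L` through the first `L` terms of `s`; the reduction modulo `L` closes the walk. -/
def cyclicProd (F : S → S → G) (L : ℕ) (s : ℕ → S) : G :=
  ((List.range L).map fun i ↦ F (s i) (s ((i + 1) % L))).prod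

theorem cyclicProd_const (F : S → S → G) (L : ℕ) (p : S) :
    cyclicProd F L (fun _ ↦ p) = F p p ^ L := by
  simp [cyclicProd]

theorem cyclicProd_succ (F : S → S → G) (L : ℕ) (s : ℕ → S) :
    cyclicProd F (L + 1) s =
      ((List.range L).map fun i ↦ F (s i) (s (i + 1))).prod * F (s L) (s 0) := by
  have interior : (List.range L).map (fun i ↦ F (s i) (s ((i + 1) % (L + 1)))) =
      (List.range L).map fun i ↦ F (s i) (s (i + 1)) :=
    List.map_congr_left fun i hi ↦ by
      rw [Nat.mod_eq_of_lt (Nat.succ_lt_succ (List.mem_range.mp hi))]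
  rw [cyclicProd, List.prod_range_succ, interior, Nat.mod_self]

theorem diag_eq_one_of_cyclicProd_eq_one (hmn : m.Coprime n)
    (hFm : ∀ s, cyclicProd F m s = 1) (hFn : ∀ s, cyclicProd F n s = 1) (p : S) :
    F p p = 1 := by
  have pow_m : F p p ^ m = 1 := by rw [← cyclicProd_const, hFm]
  have pow_n : F p p ^ n = 1 := by rw [← cyclicProd_const, hFn]
  exact (pow_eq_one_iff_of_coprime hmn).mp ⟨pow_m, pow_n⟩

theorem triangle_eq_one_of_cyclicProd_eq_one (hm : 3 ≤ m) (hF : ∀ p, F p p = 1)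
    (hFm : ∀ s, cyclicProd F m s = 1) (p q r : S) :
    F p q * F q r * F r p = 1 := by
  obtain ⟨k, rfl⟩ := Nat.exists_eq_add_of_le' hm
  let s : ℕ → S
    | 0 => p
    | 1 => q
    | _ => r
  have prod_s : cyclicProd F (k + 3) s = F p q * F q r * F r p := by
    rw [cyclicProd_succ, List.prod_range_succ', List.prod_range_succ']
    simp [s, hF, mul_assoc]
  rw [← prod_s, hFm]

theorem circular_prod_group_general (hm : 3 ≤ m) (hmn : m.Coprime n)
    (hFm : ∀ s, cyclicProd F m s = 1) (hFn : ∀ s, cyclicProd F n s = 1) (p q r : S) :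
    F p q * F q r = F p r := by
  have diag : ∀ a, F a a = 1 := diag_eq_one_of_cyclicProd_eq_one hmn hFm hFn
  have triangle : ∀ a b c, F a b * F b c * F c a = 1 :=
    triangle_eq_one_of_cyclicProd_eq_one hm diag hFm
  have inverse : F r p * F p r = 1 := by simpa [diag] using triangle r p r
  exact left_inv_eq_right_inv (triangle p q r) inverse

end CyclicProd

/-- if every cyclic ordered product `F (s 1, s 2) ⋯ F (s L, s 1)` of length
`L ≥ M` is the identity, then `F (p, q) = F (p, r) * (F (q, r))⁻¹` for all `p q r`. -/
theorem circular_prod_group {S G : Type*} [Group G] (M : ℕ) (F : S → S → G)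
    (h : ∀ L : ℕ, M ≤ L → ∀ s : ℕ → S,
      ((List.range L).map fun i => F (s i) (s ((i + 1) % L))).prod = 1) :
    ∀ p q r : S, F p q = F p r * (F q r)⁻¹ := by
  intro p q r
  have coprime : (M + 3).Coprime (M + 3 + 1) := by simp
  exact eq_mul_inv_of_mul_eq <| circular_prod_group_general (Nat.le_add_left 3 M) coprime
    (h (M + 3) (by lia)) (h (M + 3 + 1) (by lia)) p q r
end

section
/- Let b : ℕ → ℝ∖{0} and c : ℕ → ℝ with c(1) = 0. Then for every n ≥ 1, ∑_{ℓ=0}^{n−1} (c(1+ℓ) − c(n−ℓ))·∏_{k=1}^{ℓ} (b(k)/b(n−k)) = 0. -/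
/-!
The weight of index `ℓ` equals `(b 1 ⋯ b ℓ) * (b 1 ⋯ b (n - 1 - ℓ)) / (b 1 ⋯ b (n - 1))`, which is
symmetric under `ℓ ↦ n - 1 - ℓ`. The same reflection exchanges `c (1 + ℓ)` and `c (n - ℓ)`, so
reindexing the weighted sum of the `c (n - ℓ)` turns it into that of the `c (1 + ℓ)`.
-/

open Finset

theorem sum_range_sub_reflect_mul_eq_zero {R : Type*} [NonUnitalNonAssocRing R]
    (f w : ℕ → R) (n : ℕ) (hw : ∀ ℓ < n, w (n - 1 - ℓ) = w ℓ) :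
    ∑ ℓ ∈ range n, (f ℓ - f (n - 1 - ℓ)) * w ℓ = 0 := by
  have reflect : ∑ ℓ ∈ range n, f (n - 1 - ℓ) * w ℓ = ∑ ℓ ∈ range n, f ℓ * w ℓ := by
    rw [← sum_range_reflect (fun ℓ ↦ f ℓ * w ℓ)]
    exact sum_congr rfl fun ℓ hℓ ↦ by rw [hw ℓ (mem_range.mp hℓ)]
  simp only [sub_mul, sum_sub_distrib, reflect, sub_self]

section CommGroupWithZero

variable {G : Type*} [CommGroupWithZero G] {b : ℕ → G} {n ℓ : ℕ}

theorem prod_Icc_div_reflect_eq (hb : ∀ k ∈ Ico 1 n, b k ≠ 0) (hℓ : ℓ < n) :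
    ∏ k ∈ Icc 1 ℓ, b k / b (n - k) =
      (∏ k ∈ Icc 1 ℓ, b k) * (∏ k ∈ Icc 1 (n - 1 - ℓ), b k) / ∏ k ∈ Ico 1 n, b k := by
  have denominators : ∏ k ∈ Icc 1 ℓ, b (n - k) = ∏ k ∈ Ico (n - ℓ) n, b k := by
    rw [← Ico_add_one_right_eq_Icc, prod_Ico_reflect b 1 (by lia)]
    simp only [Nat.add_sub_add_right, Nat.add_sub_cancel]
  have split : (∏ k ∈ Icc 1 (n - 1 - ℓ), b k) * ∏ k ∈ Ico (n - ℓ) n, b k =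
      ∏ k ∈ Ico 1 n, b k := by
    rw [← Ico_add_one_right_eq_Icc, show n - 1 - ℓ + 1 = n - ℓ by lia]
    exact prod_Ico_consecutive b (by lia) (Nat.sub_le n ℓ)
  have initial_ne_zero : ∏ k ∈ Icc 1 (n - 1 - ℓ), b k ≠ 0 :=
    left_ne_zero_of_mul (split ▸ prod_ne_zero_iff.mpr hb)
  rw [prod_div_distrib, denominators, ← split, mul_comm, mul_div_mul_left _ _ initial_ne_zero]

theorem prod_Icc_div_reflect_symm (hb : ∀ k ∈ Ico 1 n, b k ≠ 0) (hℓ : ℓ < n) :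
    ∏ k ∈ Icc 1 (n - 1 - ℓ), b k / b (n - k) = ∏ k ∈ Icc 1 ℓ, b k / b (n - k) := by
  rw [prod_Icc_div_reflect_eq hb hℓ, prod_Icc_div_reflect_eq hb (by lia),
    Nat.sub_sub_self (by lia), mul_comm (∏ k ∈ Icc 1 ℓ, b k)]

end CommGroupWithZero

theorem circular_c_sum_vanishes_general {K : Type*} [Field K] (b c : ℕ → K) (n : ℕ)
    (hb : ∀ k ∈ Ico 1 n, b k ≠ 0) :
    ∑ ℓ ∈ range n, (c (1 + ℓ) - c (n - ℓ)) * ∏ k ∈ Icc 1 ℓ, b k / b (n - k) = 0 := by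
  rw [← sum_range_sub_reflect_mul_eq_zero (fun ℓ ↦ c (1 + ℓ))
    (fun ℓ ↦ ∏ k ∈ Icc 1 ℓ, b k / b (n - k)) n fun _ hℓ ↦ prod_Icc_div_reflect_symm hb hℓ]
  refine sum_congr rfl fun ℓ hℓ ↦ ?_
  have index_reflect : 1 + (n - 1 - ℓ) = n - ℓ := by grind
  rw [index_reflect]

/-- for `b : ℕ → ℝ∖{0}` and `c : ℕ → ℝ` with `c 1 = 0`, for every `n ≥ 1`,
`∑_{ℓ=0}^{n-1} (c (1+ℓ) - c (n-ℓ)) * ∏_{k=1}^{ℓ} (b k / b (n-k)) = 0`. -/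
theorem circular_c_sum_vanishes (b : ℕ → ℝ) (hb : ∀ n, b n ≠ 0)
    (c : ℕ → ℝ) (hc : c 1 = 0) (n : ℕ) (hn : 1 ≤ n) :
    ∑ ℓ ∈ Finset.range n,
      (c (1 + ℓ) - c (n - ℓ)) * ∏ k ∈ Finset.Icc 1 ℓ, b k / b (n - k) = 0 :=
  circular_c_sum_vanishes_general b c n fun k _ ↦ hb k
end

section
/- Let u be a rate function (u(m,n) > 0 for m ≥ 1, n ≥ 0; u(0,n) = 0) such that for all m, n ≥ 1, u(m,n) + u(n,m) = (u(1,n)/u(n+1,0))·(u(m,0)/u(1,m−1))·u(n+1,m−1) + (u(1,m)/u(m+1,0))·(u(n,0)/u(1,n−1))·u(m+1,n−1). Then for all m, n ≥ 1, u(m,n)/(u(m,0)·u(1,n)) = u(n+1,m−1)/(u(n+1,0)·u(1,m−1)). -/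
open scoped Classical

/-!
Write `w m n = u m n / (u m 0 * u 1 n)`, so that the claim is `w (m + 1) n = w (n + 1) m`. In terms
of `w`, the balance identity at `(m + 1, n + 1)` says that a linear combination, with nonzero
coefficients, of the defects `w (m + 1) (n + 1) - w (n + 2) m` and `w (n + 1) (m + 1) - w (m + 2) n`
vanishes. The claim therefore passes from `(m, n + 1)` to `(m + 1, n)`, and it spreads along each
antidiagonal from `m = 0`, where both sides equal `(u 1 0)⁻¹`.
-/

namespace LRMP

section NormalizedRate

variable {K : Type*} [Semifield K] {u : ℕ → ℕ → K} {m n : ℕ}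

/-- The rate `u m n` divided by its two marginals `u m 0` and `u 1 n`. It is the quantity on each
side of the Cocozza-type condition, and it is meaningful only where both marginals are nonzero. -/
def normalizedRate (u : ℕ → ℕ → K) (m n : ℕ) : K :=
  u m n / (u m 0 * u 1 n)

theorem normalizedRate_zero_right (hm : u m 0 ≠ 0) : normalizedRate u m 0 = (u 1 0)⁻¹ :=
  div_mul_cancel_left₀ hm (u 1 0)

theorem normalizedRate_one_left (hn : u 1 n ≠ 0) : normalizedRate u 1 n = (u 1 0)⁻¹ :=
  div_mul_cancel_right₀ hn (u 1 0)

theorem mul_normalizedRate (hm : u m 0 ≠ 0) (hn : u 1 n ≠ 0) :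
    u m 0 * u 1 n * normalizedRate u m n = u m n :=
  mul_div_cancel₀ (u m n) (mul_ne_zero hm hn)

theorem div_mul_div_mul_eq_mul_normalizedRate (u : ℕ → ℕ → K) (m n : ℕ) (a b : K) :
    a / u m 0 * (b / u 1 n) * u m n = b * a * normalizedRate u m n := by
  rw [normalizedRate, div_mul_div_comm, div_mul_eq_mul_div, mul_div_assoc, mul_comm a b]

theorem normalizedRate_eq_of_add_eq_add [IsCancelAdd K] {a b : K}
    (hm₀ : u m 0 ≠ 0) (hm₁ : u 1 m ≠ 0) (hn₀ : u n 0 ≠ 0) (hn₁ : u 1 n ≠ 0)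
    (balance : u m n + u n m = u m 0 * u 1 n * a + u n 0 * u 1 m * b)
    (hmn : normalizedRate u m n = a) : normalizedRate u n m = b := by
  rw [← hmn, mul_normalizedRate hm₀ hn₁] at balance
  have cancelled : u n m = u n 0 * u 1 m * b := add_left_cancel balance
  rw [← mul_normalizedRate hn₀ hm₁] at cancelled
  exact mul_left_cancel₀ (mul_ne_zero hn₀ hm₁) cancelled

end NormalizedRate

theorem hslrmp_simplify_u_general {K : Type*} [Semifield K] [IsCancelAdd K] (u : ℕ → ℕ → K)
    (hu₀ : ∀ m, u (m + 1) 0 ≠ 0) (hu₁ : ∀ n, u 1 n ≠ 0)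
    (h : ∀ m n : ℕ,
      u (m + 1) (n + 1) + u (n + 1) (m + 1) =
        u 1 (n + 1) / u (n + 2) 0 * (u (m + 1) 0 / u 1 m) * u (n + 2) m
          + u 1 (m + 1) / u (m + 2) 0 * (u (n + 1) 0 / u 1 n) * u (m + 2) n)
    (m n : ℕ) :
    u (m + 1) n / (u (m + 1) 0 * u 1 n) = u (n + 1) m / (u (n + 1) 0 * u 1 m) := by
  change normalizedRate u (m + 1) n = normalizedRate u (n + 1) m
  induction m generalizing n with
  | zero => rw [zero_add, normalizedRate_one_left (hu₁ n), normalizedRate_zero_right (hu₀ n)]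
  | succ m ih =>
    have balance := h m n
    simp only [div_mul_div_mul_eq_mul_normalizedRate] at balance
    exact (normalizedRate_eq_of_add_eq_add (hu₀ m) (hu₁ (m + 1)) (hu₀ n) (hu₁ (n + 1))
      balance (ih (n + 1))).symm

/-- the algebraic implication in the symmetric case: the symmetrised
balance identity implies the Cocozza-type condition. -/
theorem hslrmp_simplify_u (u : ℕ → ℕ → ℝ) (hu : IsRate u)
    (h : ∀ m n : ℕ, 1 ≤ m → 1 ≤ n →
      u m n + u n m =
        u 1 n / u (n + 1) 0 * (u m 0 / u 1 (m - 1)) * u (n + 1) (m - 1)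
          + u 1 m / u (m + 1) 0 * (u n 0 / u 1 (n - 1)) * u (m + 1) (n - 1)) :
    ∀ m n : ℕ, 1 ≤ m → 1 ≤ n →
      u m n / (u m 0 * u 1 n) = u (n + 1) (m - 1) / (u (n + 1) 0 * u 1 (m - 1)) := by
  rintro (_ | m) n hm -
  · contradiction
  · exact hslrmp_simplify_u_general u (fun m ↦ (hu.1 _ 0 m.succ_pos).ne')
      (fun n ↦ (hu.1 1 n le_rfl).ne') (fun m n ↦ h _ _ m.succ_pos n.succ_pos) m n

end LRMP
end
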